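/- arXiv:2307.03848 — 2 statements merged into one kernel-verified Lean document; each statement's English description precedes it below -/
import Mathlib

section
/- (Random swaps.) For every n ∈ ℕ, every measurable space Z, every probability measure D on Z, and every measurable set R ⊆ Z^{2n}: D^{2n}(R) = E_{z∼D^{2n}}[ Pr_{σ∼U(Γ_n)}( σ(z) ∈ R ) ], and consequently D^{2n}(R) ≤ max_{z ∈ Z^{2n}} Pr_{σ∼U(Γ_n)}( σ(z) ∈ R ), the maximum being attained because the inner probability takes only finitely many values. -/
/-!
Every permutation of the coordinates preserves the product measure `D^{2n}`, so
`D^{2n} {z | σ(z) ∈ R} = D^{2n}(R)` for each `σ` (`measure_perm_preimage`). The swap probability is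
the average over `σ ∈ Γ_n` of the indicators of these events (`ofReal_swapProb`), so integrating
it gives back `D^{2n}(R)`. Its values lie in the finite set `{k / |Γ_n| : k ≤ |Γ_n|}`, so it has a
maximum over the nonempty space `Z^{2n}` (`exists_max_swapProb`), which bounds the average because
`D^{2n}` has mass one.
-/

open MeasureTheory
open scoped ENNReal Classical

namespace RealizableRegression

/-- The first half embedding `[n] → [2n]`, `i ↦ i`. -/
def finL (n : ℕ) (i : Fin n) : Fin (2 * n) := ⟨i.1, by have := i.2; omega⟩

/-- The second half embedding `[n] → [2n]`, `i ↦ n + i`. -/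
def finR (n : ℕ) (i : Fin n) : Fin (2 * n) := ⟨n + i.1, by have := i.2; omega⟩

/-- `Γ_n`: the `2^n` permutations of `[2n]` that, for each `i ∈ [n]`, either fix both
`i` and `n+i` or swap them. -/
def swapPerms (n : ℕ) : Finset (Equiv.Perm (Fin (2 * n))) :=
  Finset.univ.filter fun σ => ∀ i : Fin n,
    (σ (finL n i) = finL n i ∧ σ (finR n i) = finR n i) ∨
    (σ (finL n i) = finR n i ∧ σ (finR n i) = finL n i)

/-- `Pr_{σ ∼ U(Γ_n)} [σ(z) ∈ R]`, where `σ(z) = (z_{σ(1)}, …, z_{σ(2n)})`. -/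
noncomputable def swapProb {Z : Type*} (n : ℕ) (R : Set (Fin (2 * n) → Z))
    (z : Fin (2 * n) → Z) : ℝ :=
  (((swapPerms n).filter fun σ => (fun i => z (σ i)) ∈ R).card : ℝ) /
    ((swapPerms n).card : ℝ)

theorem measurable_perm {Z : Type*} [MeasurableSpace Z] {m : ℕ} (σ : Equiv.Perm (Fin m)) :
    Measurable fun (z : Fin m → Z) (i : Fin m) => z (σ i) :=
  measurable_pi_lambda _ fun i => measurable_pi_apply (σ i)

/-- Product measures with equal factors are exchangeable. It suffices to compare both measures
on boxes, where permuting the sides does not change the product of their measures. -/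
theorem measure_perm_preimage {Z : Type*} [MeasurableSpace Z] (D : Measure Z)
    [IsProbabilityMeasure D] {m : ℕ} (σ : Equiv.Perm (Fin m)) {R : Set (Fin m → Z)}
    (hR : MeasurableSet R) :
    (Measure.pi fun _ : Fin m => D) ((fun z i => z (σ i)) ⁻¹' R)
      = (Measure.pi fun _ : Fin m => D) R := by
  rw [← Measure.map_apply (measurable_perm σ) hR]
  congr 1
  symm
  refine Measure.pi_eq fun s hs => ?_
  rw [Measure.map_apply (measurable_perm σ) (MeasurableSet.univ_pi hs)]
  have h : (fun (z : Fin m → Z) (i : Fin m) => z (σ i)) ⁻¹' Set.univ.pi s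
      = Set.univ.pi fun i => s (σ.symm i) := by
    ext z
    simp only [Set.mem_preimage, Set.mem_univ_pi]
    exact ⟨fun hz i => by simpa using hz (σ.symm i), fun hz i => by simpa using hz (σ i)⟩
  rw [h, Measure.pi_pi]
  exact Equiv.prod_comp σ.symm fun i => D (s i)

theorem swapPerms_card_pos (n : ℕ) : 0 < (swapPerms n).card :=
  Finset.card_pos.mpr ⟨1, by simp [swapPerms]⟩

theorem ofReal_swapProb {Z : Type*} (n : ℕ) (R : Set (Fin (2 * n) → Z)) (z : Fin (2 * n) → Z) :
    ENNReal.ofReal (swapProb n R z)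
      = (∑ σ ∈ swapPerms n, ((fun z i => z (σ i)) ⁻¹' R).indicator (fun _ => (1 : ℝ≥0∞)) z)
        * ((swapPerms n).card : ℝ≥0∞)⁻¹ := by
  have hpos : (0 : ℝ) < (swapPerms n).card := by exact_mod_cast swapPerms_card_pos n
  rw [swapProb, ENNReal.ofReal_div_of_pos hpos, ENNReal.ofReal_natCast, ENNReal.ofReal_natCast,
    div_eq_mul_inv]
  congr 1
  simp [Set.indicator_apply, Finset.sum_boole]

theorem exists_max_swapProb {Z : Type*} [Nonempty Z] (n : ℕ) (R : Set (Fin (2 * n) → Z)) :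
    ∃ z₀ : Fin (2 * n) → Z, ∀ z, swapProb n R z ≤ swapProb n R z₀ := by
  let c : (Fin (2 * n) → Z) → ℕ := fun z =>
    ((swapPerms n).filter fun σ => (fun i => z (σ i)) ∈ R).card
  have hfin : (Set.range c).Finite := by
    refine (Set.finite_Iic (swapPerms n).card).subset ?_
    rintro _ ⟨z, rfl⟩
    exact Finset.card_filter_le _ _
  obtain ⟨_, ⟨z₀, rfl⟩, h⟩ := Set.exists_max_image _ id hfin (Set.range_nonempty c)
  refine ⟨z₀, fun z => div_le_div_of_nonneg_right ?_ (Nat.cast_nonneg _)⟩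
  exact_mod_cast h (c z) ⟨z, rfl⟩

/-- Random swaps: for every measurable `R ⊆ Z^{2n}` and probability
measure `D` on `Z`, `D^{2n}(R) = E_{z ∼ D^{2n}}[Pr_{σ ∼ U(Γ_n)}(σ(z) ∈ R)]`, and the
latter is bounded by the (attained) maximum over `z` of the inner probability. -/
theorem statement4 {Z : Type*} [MeasurableSpace Z] (D : Measure Z) [IsProbabilityMeasure D]
    (n : ℕ) (R : Set (Fin (2 * n) → Z)) (hR : MeasurableSet R) :
    (Measure.pi fun _ : Fin (2 * n) => D) R
      = ∫⁻ z, ENNReal.ofReal (swapProb n R z) ∂(Measure.pi fun _ : Fin (2 * n) => D) ∧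
    ∃ z₀ : Fin (2 * n) → Z, (∀ z, swapProb n R z ≤ swapProb n R z₀) ∧
      (Measure.pi fun _ : Fin (2 * n) => D) R ≤ ENNReal.ofReal (swapProb n R z₀) := by
  have key : (Measure.pi fun _ : Fin (2 * n) => D) R
      = ∫⁻ z, ENNReal.ofReal (swapProb n R z) ∂(Measure.pi fun _ : Fin (2 * n) => D) := by
    have hm : ∀ σ : Equiv.Perm (Fin (2 * n)),
        MeasurableSet ((fun (z : Fin (2 * n) → Z) i => z (σ i)) ⁻¹' R) :=
      fun σ => measurable_perm σ hR
    have h0 : ((swapPerms n).card : ℝ≥0∞) ≠ 0 := by exact_mod_cast (swapPerms_card_pos n).ne'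
    simp_rw [ofReal_swapProb]
    rw [lintegral_mul_const' _ _ (ENNReal.inv_ne_top.mpr h0),
      lintegral_finsetSum _ fun σ _ => measurable_const.indicator (hm σ)]
    simp_rw [lintegral_indicator_const (hm _), one_mul, measure_perm_preimage D _ hR]
    rw [Finset.sum_const, nsmul_eq_mul, mul_right_comm,
      ENNReal.mul_inv_cancel h0 (ENNReal.natCast_ne_top _), one_mul]
  have : Nonempty Z := nonempty_of_isProbabilityMeasure D
  obtain ⟨z₀, hz₀⟩ := exists_max_swapProb n R
  refine ⟨key, z₀, hz₀, ?_⟩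
  calc (Measure.pi fun _ : Fin (2 * n) => D) R
      = ∫⁻ z, ENNReal.ofReal (swapProb n R z) ∂(Measure.pi fun _ : Fin (2 * n) => D) := key
    _ ≤ ∫⁻ _, ENNReal.ofReal (swapProb n R z₀) ∂(Measure.pi fun _ : Fin (2 * n) => D) :=
        lintegral_mono fun z => ENNReal.ofReal_le_ofReal (hz₀ z)
    _ = ENNReal.ofReal (swapProb n R z₀) := by simp

end RealizableRegression
end

section
/- (Online realizable regression, upper bound.) For every hypothesis class H ⊆ [0,1]^X with D^onl(H) < ∞ and every ε > 0, there exists a deterministic online learner f such that for every T ∈ ℕ and every sequence (x_1,y_1),…,(x_T,y_T) in X × [0,1] realizable by H, the cumulative loss satisfies Σ_{t=1}^T |ŷ_t − y_t| ≤ D^onl(H) + ε, where ŷ_t = f((x_1,y_1),…,(x_{t−1},y_{t−1}), x_t). -/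
/-!
The learner keeps the version space `V ⊆ H` of functions consistent with the history and uses the
online dimension of `V` as a potential, in the recursive form `pot`: trees are described by a root
and two subtrees living on the restricted classes (`Good`). Only the inequality
`pot H ≤ onlDim H` between the two forms is needed (`Good.le_onlDim`).

If `a` and `b` are feasible labels at `x`, joining near-optimal trees for the restrictions `V_a`
and `V_b` under a root with labels `a`, `b` gives `min (pot V_a) (pot V_b) + |a - b| ≤ pot V`
(`min_pot_add_le`; trees of different depths are first padded by nodes with gap `0`). Hence the
intervals of radius `pot V - pot V_a` around the feasible labels `a` intersect pairwise, so by the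
one-dimensional Helly property they have a common point, and predicting it makes the loss of the
round at most the decrease of the potential (`predict_loss`). The losses telescope, and their sum
is at most `pot H ≤ onlDim H`; the slack `ε` is not used.
-/

open scoped ENNReal

namespace RealizableRegression

/-- The prefix of length `ℓ` of the root-to-leaf path `y`. -/
def pathPref {d : ℕ} (y : Fin d → Bool) (ℓ : ℕ) : List Bool := (List.ofFn y).take ℓ

/-- `(x, s)` is a scaled Littlestone tree of depth `d` for `H`: nodes `x u ∈ X` for
positions `u ∈ {0,1}^{<d}`, edge labels `s u b ∈ [0,1]` for the edge from `u` to its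
child `b`, such that for every path `y ∈ {0,1}^d` and every `n < d` there is `h ∈ H`
realizing the first `n+1` edge labels along `y`. -/
def IsSLTree {X : Type*} (H : Set (X → ℝ)) (d : ℕ)
    (x : List Bool → X) (s : List Bool → Bool → ℝ) : Prop :=
  (∀ u b, s u b ∈ Set.Icc (0:ℝ) 1) ∧
    ∀ y : Fin d → Bool, ∀ n : ℕ, n < d → ∃ h ∈ H, ∀ ℓ : Fin d, (ℓ : ℕ) ≤ n →
      h (x (pathPref y ℓ)) = s (pathPref y ℓ) (y ℓ)

/-- The sum of the gaps `γ_u = |s_{u0} − s_{u1}|` along the path `y`. -/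
noncomputable def pathGaps {d : ℕ} (s : List Bool → Bool → ℝ) (y : Fin d → Bool) : ℝ :=
  ∑ ℓ : Fin d, |s (pathPref y ℓ) false - s (pathPref y ℓ) true|

/-- The online dimension `D^onl(H)`: the supremum over all finite-depth scaled
Littlestone trees of the infimum over root-to-leaf paths of the sum of the gaps. -/
noncomputable def onlDim {X : Type*} (H : Set (X → ℝ)) : ℝ≥0∞ :=
  ⨆ (d : ℕ) (x : List Bool → X) (s : List Bool → Bool → ℝ) (_ : IsSLTree H d x s),
    ⨅ y : Fin d → Bool, ENNReal.ofReal (pathGaps s y)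

/-- The history `((x_1,y_1), …, (x_{t−1},y_{t−1}))` seen before round `t`. -/
def histBefore {X : Type*} {T : ℕ} (xs : Fin T → X) (ys : Fin T → ℝ) (t : Fin T) :
    List (X × ℝ) :=
  List.ofFn fun i : Fin t.1 =>
    (xs ⟨i.1, i.2.trans t.2⟩, ys ⟨i.1, i.2.trans t.2⟩)

/-! ### Recursive description of trees -/

/-- The functions of `V` taking the value `a` at `x`. -/
def restr {X : Type*} (V : Set (X → ℝ)) (x : X) (a : ℝ) : Set (X → ℝ) := {h ∈ V | h x = a}

/-- `Good n V c`: the class `V` is nonempty and shatters a tree of depth `n` all of whose paths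
have total gap at least `c`. The tree is described recursively through its root (point `x`, edge
labels `a`, `b`) and its two subtrees, which live on the restricted classes. -/
def Good {X : Type*} : ℕ → Set (X → ℝ) → ℝ → Prop
  | 0, V, c => V.Nonempty ∧ c ≤ 0
  | n + 1, V, c => ∃ x a b, Good n (restr V x a) (c - |a - b|) ∧ Good n (restr V x b) (c - |a - b|)

theorem Good.nonempty {X : Type*} {n : ℕ} {V : Set (X → ℝ)} {c : ℝ} (h : Good n V c) :
    V.Nonempty := by
  induction n generalizing V c with
  | zero => exact h.1
  | succ n ih =>
    obtain ⟨x, a, b, h1, -⟩ := h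
    exact (ih h1).mono fun _ hg => hg.1

theorem Good.mono {X : Type*} {n : ℕ} {V W : Set (X → ℝ)} {c c' : ℝ} (h : Good n V c)
    (hVW : V ⊆ W) (hc : c' ≤ c) : Good n W c' := by
  induction n generalizing V W c c' with
  | zero => exact ⟨h.1.mono hVW, hc.trans h.2⟩
  | succ n ih =>
    obtain ⟨x, a, b, h1, h2⟩ := h
    exact ⟨x, a, b, ih h1 (fun _ hg => ⟨hVW hg.1, hg.2⟩) (by linarith),
      ih h2 (fun _ hg => ⟨hVW hg.1, hg.2⟩) (by linarith)⟩

/-- Trees can be deepened: below each leaf a node with gap `0` is appended, labelled by the value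
of a function consistent with that leaf. -/
theorem Good.succ {X : Type*} [Nonempty X] {n : ℕ} {V : Set (X → ℝ)} {c : ℝ} (h : Good n V c) :
    Good (n + 1) V c := by
  induction n generalizing V c with
  | zero =>
    obtain ⟨⟨g, hg⟩, hc⟩ := h
    have x : X := Classical.arbitrary X
    have : Good 0 (restr V x (g x)) (c - |g x - g x|) := ⟨⟨g, hg, rfl⟩, by simpa using hc⟩
    exact ⟨x, g x, g x, this, this⟩
  | succ n ih =>
    obtain ⟨x, a, b, h1, h2⟩ := h
    exact ⟨x, a, b, ih h1, ih h2⟩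

theorem Good.le_depth {X : Type*} [Nonempty X] {n m : ℕ} {V : Set (X → ℝ)} {c : ℝ}
    (h : Good n V c) (hnm : n ≤ m) : Good m V c :=
  Nat.le_induction h (fun _ _ ih => ih.succ) m hnm

theorem pathPref_succ {d : ℕ} (y : Fin (d + 1) → Bool) (l : ℕ) :
    pathPref y (l + 1) = y 0 :: pathPref (fun i : Fin d => y i.succ) l := by
  simp [pathPref, List.ofFn_succ]

/-- A recursively described tree can be laid out on positions `u ∈ {0,1}^{<n}`. Realizability is
stated for complete paths, which also covers depth `0`. -/
theorem Good.tree {X : Type*} [Nonempty X] {n : ℕ} {V : Set (X → ℝ)} {c : ℝ}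
    (hV : ∀ h ∈ V, ∀ x, h x ∈ Set.Icc (0:ℝ) 1) (h : Good n V c) :
    ∃ (x : List Bool → X) (s : List Bool → Bool → ℝ), (∀ u b, s u b ∈ Set.Icc (0:ℝ) 1) ∧
      ∀ y : Fin n → Bool, c ≤ pathGaps s y ∧
        ∃ h ∈ V, ∀ l : Fin n, h (x (pathPref y l)) = s (pathPref y l) (y l) := by
  induction n generalizing V c with
  | zero =>
    obtain ⟨⟨g, hg⟩, hc⟩ := h
    refine ⟨fun _ => Classical.arbitrary X, fun _ _ => 0, by simp, fun y => ⟨?_, g, hg, ?_⟩⟩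
    · simpa [pathGaps] using hc
    · exact fun l => l.elim0
  | succ n ih =>
    obtain ⟨x, a, b, h1, h2⟩ := h
    have ha : a ∈ Set.Icc (0:ℝ) 1 := by
      obtain ⟨g, hg, rfl⟩ := h1.nonempty
      exact hV g hg x
    have hb : b ∈ Set.Icc (0:ℝ) 1 := by
      obtain ⟨g, hg, rfl⟩ := h2.nonempty
      exact hV g hg x
    obtain ⟨x0, s0, hs0, t0⟩ := ih (fun g hg => hV g hg.1) h1
    obtain ⟨x1, s1, hs1, t1⟩ := ih (fun g hg => hV g hg.1) h2
    refine ⟨fun u => match u with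
        | [] => x
        | false :: u => x0 u
        | true :: u => x1 u,
      fun u e => match u with
        | [] => if e then b else a
        | false :: u => s0 u e
        | true :: u => s1 u e, ?_, ?_⟩
    · rintro (_ | ⟨_ | _, u⟩) e
      · cases e <;> simpa
      · exact hs0 u e
      · exact hs1 u e
    · intro y
      have p0 : pathPref y 0 = [] := by simp [pathPref]
      cases hy : y 0 with
      | false =>
        obtain ⟨hc, g, hg, hgl⟩ := t0 (fun i => y i.succ)
        refine ⟨?_, g, hg.1, fun l => ?_⟩
        · simp only [pathGaps, Fin.sum_univ_succ, Fin.val_zero, Fin.val_succ, p0, pathPref_succ,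
            hy] at hc ⊢
          simp only [Bool.false_eq_true, if_true, if_false]
          linarith
        · refine Fin.cases ?_ (fun i => ?_) l
          · simp only [Fin.val_zero, p0, hy]
            simpa using hg.2
          · simpa only [Fin.val_succ, pathPref_succ, hy] using hgl i
      | true =>
        obtain ⟨hc, g, hg, hgl⟩ := t1 (fun i => y i.succ)
        refine ⟨?_, g, hg.1, fun l => ?_⟩
        · simp only [pathGaps, Fin.sum_univ_succ, Fin.val_zero, Fin.val_succ, p0, pathPref_succ,
            hy] at hc ⊢
          simp only [Bool.false_eq_true, if_true, if_false]
          linarith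
        · refine Fin.cases ?_ (fun i => ?_) l
          · simp only [Fin.val_zero, p0, hy]
            simpa using hg.2
          · simpa only [Fin.val_succ, pathPref_succ, hy] using hgl i

theorem Good.le_onlDim {X : Type*} [Nonempty X] {n : ℕ} {H : Set (X → ℝ)} {c : ℝ}
    (hH : ∀ h ∈ H, ∀ x, h x ∈ Set.Icc (0:ℝ) 1) (hfin : onlDim H ≠ ⊤) (h : Good n H c) :
    c ≤ (onlDim H).toReal := by
  obtain ⟨x, s, hs, ht⟩ := h.tree hH
  have hT : IsSLTree H n x s := ⟨hs, fun y m _ => by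
    obtain ⟨g, hg, hgl⟩ := (ht y).2
    exact ⟨g, hg, fun l _ => hgl l⟩⟩
  rw [← ENNReal.ofReal_le_iff_le_toReal hfin]
  refine le_trans (le_iInf fun y => ENNReal.ofReal_le_ofReal (ht y).1) ?_
  exact le_iSup_of_le n (le_iSup_of_le x (le_iSup_of_le s (le_iSup_of_le hT le_rfl)))

/-! ### The potential -/

/-- The recursive form of the online dimension, as a real number. It is `0` on the empty
class, and a junk `0` when the set of achievable gap sums is unbounded. -/
noncomputable def pot {X : Type*} (V : Set (X → ℝ)) : ℝ := sSup {c | ∃ n, Good n V c}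

theorem pot_nonneg {X : Type*} (V : Set (X → ℝ)) : 0 ≤ pot V := by
  rcases V.eq_empty_or_nonempty with rfl | hV
  · have : {c | ∃ n, Good n (∅ : Set (X → ℝ)) c} = ∅ := by
      ext c
      simp only [Set.mem_ofPred_eq, Set.mem_empty_iff_false, iff_false]
      rintro ⟨n, hn⟩
      exact Set.not_nonempty_empty hn.nonempty
    simp [pot, this]
  · by_cases hb : BddAbove {c | ∃ n, Good n V c}
    · exact le_csSup hb ⟨0, hV, le_rfl⟩
    · simp [pot, Real.sSup_of_not_bddAbove hb]

theorem pot_mono {X : Type*} {V W : Set (X → ℝ)} (hb : BddAbove {c | ∃ n, Good n W c})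
    (hne : V.Nonempty) (h : V ⊆ W) : pot V ≤ pot W :=
  csSup_le_csSup hb ⟨0, 0, hne, le_rfl⟩ fun _ ⟨n, hn⟩ => ⟨n, hn.mono h le_rfl⟩

/-- Two feasible labels `a`, `b` at `x` that both keep the potential high must be close to each
other, since near-optimal trees for the two restrictions can be joined under a new root. -/
theorem min_pot_add_le {X : Type*} {V : Set (X → ℝ)} (hb : BddAbove {c | ∃ n, Good n V c})
    {x : X} {a b : ℝ} (ha : (restr V x a).Nonempty) (hb' : (restr V x b).Nonempty) :
    min (pot (restr V x a)) (pot (restr V x b)) + |a - b| ≤ pot V := by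
  have : Nonempty X := ⟨x⟩
  refine le_of_forall_pos_le_add fun η hη => ?_
  obtain ⟨c, ⟨n, hn⟩, hc⟩ := exists_lt_of_lt_csSup
    (s := {c | ∃ n, Good n (restr V x a) c}) ⟨0, 0, ha, le_rfl⟩ (sub_lt_self (pot _) hη)
  obtain ⟨c', ⟨m, hm⟩, hc'⟩ := exists_lt_of_lt_csSup
    (s := {c | ∃ n, Good n (restr V x b) c}) ⟨0, 0, hb', le_rfl⟩ (sub_lt_self (pot _) hη)
  have key : Good (max n m + 1) V (min c c' + |a - b|) :=
    ⟨x, a, b, (hn.le_depth (le_max_left n m)).mono subset_rfl (by simp),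
      (hm.le_depth (le_max_right n m)).mono subset_rfl (by simp)⟩
  have h1 : min c c' + |a - b| ≤ pot V := le_csSup hb ⟨_, key⟩
  have h2 : min (pot (restr V x a)) (pot (restr V x b)) - η ≤ min c c' :=
    le_min (by linarith [min_le_left (pot (restr V x a)) (pot (restr V x b))])
      (by linarith [min_le_right (pot (restr V x a)) (pot (restr V x b))])
  linarith

/-! ### The learner -/

/-- The prediction at `x` with version space `V`: the supremum of the left endpoints of the intervals of
radius `pot V - pot (restr V x a)` around the feasible labels `a`, clamped to `[0,1]`. -/
noncomputable def predict {X : Type*} (V : Set (X → ℝ)) (x : X) : ℝ :=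
  max 0 (min 1 (sSup {z | ∃ a, (restr V x a).Nonempty ∧ z = a - (pot V - pot (restr V x a))}))

/-- The loss of a round is at most the drop of the potential: by `min_pot_add_le` the intervals
around the feasible labels intersect pairwise, so the supremum of the left endpoints lies in all of them. -/
theorem predict_loss {X : Type*} {V : Set (X → ℝ)} (hb : BddAbove {c | ∃ n, Good n V c})
    {x : X} {a : ℝ} (ha : (restr V x a).Nonempty) (ha01 : a ∈ Set.Icc (0:ℝ) 1) :
    |predict V x - a| ≤ pot V - pot (restr V x a) := by
  set S := {z | ∃ a, (restr V x a).Nonempty ∧ z = a - (pot V - pot (restr V x a))} with hS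
  have hmono : ∀ {b}, (restr V x b).Nonempty → pot (restr V x b) ≤ pot V :=
    fun h => pot_mono hb h fun _ hg => hg.1
  have hub : ∀ z ∈ S, z ≤ a + (pot V - pot (restr V x a)) := by
    rintro z ⟨b, hbne, rfl⟩
    have h1 := min_pot_add_le hb ha hbne
    have h2 := neg_le_abs (a - b)
    have h3 := hmono ha
    have h4 := hmono hbne
    rcases min_choice (pot (restr V x a)) (pot (restr V x b)) with h | h <;> rw [h] at h1 <;>
      linarith
  have hmem : a - (pot V - pot (restr V x a)) ∈ S := ⟨a, ha, rfl⟩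
  have hlo : a - (pot V - pot (restr V x a)) ≤ sSup S := le_csSup ⟨_, hub⟩ hmem
  have hhi : sSup S ≤ a + (pot V - pot (restr V x a)) := csSup_le ⟨_, hmem⟩ hub
  have h3 := hmono ha
  have hp : predict V x = max 0 (min 1 (sSup S)) := rfl
  obtain ⟨h0, h1⟩ := ha01
  rw [hp, abs_le]
  constructor
  · have : a - (pot V - pot (restr V x a)) ≤ min 1 (sSup S) := le_min (by linarith) hlo
    linarith [le_max_right 0 (min 1 (sSup S))]
  · have : max 0 (min 1 (sSup S)) ≤ a + (pot V - pot (restr V x a)) :=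
      max_le (by linarith) ((min_le_right _ _).trans hhi)
    linarith

/-- Online realizable regression, upper bound: if `D^onl(H) < ∞`,
then for every `ε > 0` there is a deterministic online learner whose cumulative absolute
loss on every finite `H`-realizable sequence is at most `D^onl(H) + ε`. -/
theorem statement13 {X : Type*} (H : Set (X → ℝ))
    (hH : ∀ h ∈ H, ∀ x, h x ∈ Set.Icc (0:ℝ) 1)
    (hfin : onlDim H ≠ ⊤) (ε : ℝ) (hε : 0 < ε) :
    ∃ f : List (X × ℝ) → X → ℝ, (∀ l x, f l x ∈ Set.Icc (0:ℝ) 1) ∧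
      ∀ (T : ℕ) (xs : Fin T → X) (ys : Fin T → ℝ),
        (∀ t, ys t ∈ Set.Icc (0:ℝ) 1) →
        (∀ t : Fin T, ∃ h ∈ H, ∀ τ : Fin T, τ ≤ t → h (xs τ) = ys τ) →
        ∑ t : Fin T, |f (histBefore xs ys t) (xs t) - ys t|
          ≤ (onlDim H).toReal + ε := by
  rcases isEmpty_or_nonempty X with hX | hX
  · refine ⟨fun _ _ => 0, by simp, fun T xs ys _ _ => ?_⟩
    have : IsEmpty (Fin T) := ⟨fun t => hX.elim (xs t)⟩
    simp only [Finset.univ_eq_empty, Finset.sum_empty]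
    positivity
  have hbd : ∀ V ⊆ H, BddAbove {c | ∃ n, Good n V c} := fun V hV =>
    ⟨(onlDim H).toReal, fun c ⟨n, hn⟩ => (hn.mono hV le_rfl).le_onlDim hH hfin⟩
  refine ⟨fun l => predict {h ∈ H | ∀ p ∈ l, h p.1 = p.2}, fun l x =>
    ⟨le_max_left _ _, max_le zero_le_one (min_le_left _ _)⟩, fun T xs ys hy hr => ?_⟩
  set V : ℕ → Set (X → ℝ) := fun k => {h ∈ H | ∀ i : Fin T, i.1 < k → h (xs i) = ys i} with hVdef
  have hVH : ∀ k, V k ⊆ H := fun k g hg => hg.1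
  have hhist : ∀ t : Fin T, {h ∈ H | ∀ p ∈ histBefore xs ys t, h p.1 = p.2} = V t.1 := by
    intro t
    ext g
    simp only [histBefore, List.forall_mem_ofFn_iff, hVdef, Set.mem_ofPred_eq]
    refine and_congr_right fun _ => ⟨fun h i hi => h ⟨i.1, hi⟩, fun h i => h _ i.2⟩
  have hstep : ∀ t : Fin T, restr (V t.1) (xs t) (ys t) = V (t.1 + 1) := by
    intro t
    ext g
    simp only [restr, hVdef, Set.mem_ofPred_eq]
    constructor
    · rintro ⟨⟨hg, h1⟩, h2⟩
      refine ⟨hg, fun i hi => ?_⟩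
      rcases Nat.lt_succ_iff_lt_or_eq.1 hi with h | h
      · exact h1 i h
      · rwa [Fin.ext h]
    · rintro ⟨hg, h1⟩
      exact ⟨⟨hg, fun i hi => h1 i (hi.trans (Nat.lt_succ_self _))⟩, h1 t (Nat.lt_succ_self _)⟩
  have hloss : ∀ t : Fin T, |predict {h ∈ H | ∀ p ∈ histBefore xs ys t, h p.1 = p.2} (xs t) - ys t|
      ≤ pot (V t.1) - pot (V (t.1 + 1)) := by
    intro t
    rw [hhist, ← hstep]
    refine predict_loss (hbd _ (hVH _)) ?_ (hy t)
    obtain ⟨g, hg, hgt⟩ := hr t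
    exact ⟨g, ⟨hg, fun i hi => hgt i hi.le⟩, hgt t le_rfl⟩
  have h0 : pot (V 0) ≤ (onlDim H).toReal :=
    Real.sSup_le (fun c ⟨n, hn⟩ => (hn.mono (hVH 0) le_rfl).le_onlDim hH hfin)
      ENNReal.toReal_nonneg
  calc _ ≤ ∑ t : Fin T, (pot (V t.1) - pot (V (t.1 + 1))) := Finset.sum_le_sum fun t _ => hloss t
    _ = pot (V 0) - pot (V T) := by
      rw [Fin.sum_univ_eq_sum_range (fun k => pot (V k) - pot (V (k + 1))) T,
        Finset.sum_range_sub' (fun k => pot (V k))]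
    _ ≤ (onlDim H).toReal + ε := by linarith [pot_nonneg (V T)]

end RealizableRegression
end
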